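/- Let n be a natural number and let F, G, H, I be n × n matrices over F₂ that pairwise commute. Define the block matrices D₁ = [F G H I] (size n × 4n), D₂ = [[G,H,I,0,0,0],[F,0,0,H,I,0],[0,F,0,G,0,I],[0,0,F,0,G,H]] (size 4n × 6n), D₃ = [[H,I,0,0],[G,0,I,0],[0,G,H,0],[F,0,0,I],[0,F,0,H],[0,0,F,G]] (size 6n × 4n), and D₄ = [I; H; G; F] (size 4n × n, a column of blocks). Then D₁ * D₂ = 0, D₂ * D₃ = 0, and D₃ * D₄ = 0; equivalently, the length-4 multivariate multicycle code with P_X = D₂, P_Z = D₃ᵀ, M_X = D₁, M_Z = D₄ᵀ satisfies the CSS orthogonality condition and both the X- and Z-metacheck conditions. -/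

import Mathlib

open Matrix

/-- A matrix built from an `r × c` array of `n × n` blocks. -/
def blockOfBlocks {α : Type*} {n : ℕ} (r c : ℕ)
    (B : Fin r → Fin c → Matrix (Fin n) (Fin n) α) :
    Matrix (Fin r × Fin n) (Fin c × Fin n) α :=
  Matrix.of fun p q => B p.1 q.1 p.2 q.2

/-!
Index the blocks in degree `k` by the `k`-element subsets of `{F, G, H, I}`. A nonzero block of a
boundary map then removes one element from a set, and a block of a product of two consecutive maps
is the sum over the two orders in which two elements can be removed. The two terms agree by
commutativity and cancel in characteristic two.
-/

section Koszul

variable {ι S : Type*} [DecidableEq ι]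

section Additive

variable [AddCommMonoid S]

/-- The total boundary map, over all degrees, of the Koszul complex on a family `x` in
characteristic two, where no signs occur: the basis vector of the finite set `t` is sent to the sum
over `a ∈ t` of `x a` times the basis vector of `t.erase a`. Columns are indexed by the source, rows
by the target. -/
def koszulBoundary (x : ι → S) : Matrix (Finset ι) (Finset ι) S :=
  Matrix.of fun s t => ∑ a ∈ t, if t.erase a = s then x a else 0

theorem koszulBoundary_apply (x : ι → S) (s t : Finset ι) :
    koszulBoundary x s t = ∑ a ∈ t, if t.erase a = s then x a else 0 :=
  rfl

theorem koszulBoundary_apply_eq_zero_of_card_ne (x : ι → S) {s t : Finset ι}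
    (hst : t.card ≠ s.card + 1) : koszulBoundary x s t = 0 := by
  refine Finset.sum_eq_zero fun a ha => if_neg ?_
  rintro rfl
  exact hst (Finset.card_erase_add_one ha).symm

end Additive

variable [NonUnitalNonAssocSemiring S]

theorem koszulBoundary_mul_self_apply [Fintype ι] (x : ι → S) (s u : Finset ι) :
    (koszulBoundary x * koszulBoundary x) s u =
      ∑ p ∈ u.offDiag, if (u.erase p.1).erase p.2 = s then x p.2 * x p.1 else 0 := by
  calc (koszulBoundary x * koszulBoundary x) s u
      = ∑ a ∈ u, koszulBoundary x s (u.erase a) * x a := by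
        simp only [Matrix.mul_apply, koszulBoundary_apply x _ u, Finset.mul_sum, mul_ite, mul_zero]
        rw [Finset.sum_comm]
        simp only [Finset.sum_ite_eq, Finset.mem_univ, if_true]
    _ = ∑ a ∈ u, ∑ b ∈ u.erase a, if (u.erase a).erase b = s then x b * x a else 0 := by
        simp only [koszulBoundary_apply, Finset.sum_mul, ite_mul, zero_mul]
    _ = ∑ p ∈ u.offDiag, if (u.erase p.1).erase p.2 = s then x p.2 * x p.1 else 0 := by
        refine (Finset.sum_finset_product' _ _ _ fun p => ?_).symm
        simp only [Finset.mem_offDiag, Finset.mem_erase, ne_comm, and_comm]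

theorem koszulBoundary_mul_self_eq_zero [Fintype ι] (add_self : ∀ a : S, a + a = 0) {x : ι → S}
    (hx : Pairwise fun a b => Commute (x a) (x b)) :
    koszulBoundary x * koszulBoundary x = 0 := by
  ext s u
  rw [koszulBoundary_mul_self_apply, Matrix.zero_apply]
  refine Finset.sum_involution (fun p _ => p.swap) (fun p hp => ?_) (fun p hp _ => ?_)
    (fun p hp => ?_) fun p _ => p.swap_swap
  · have hcomm : x p.1 * x p.2 = x p.2 * x p.1 := hx (Finset.mem_offDiag.mp hp).2.2
    simp only [Prod.fst_swap, Prod.snd_swap, Finset.erase_right_comm (a := p.2), hcomm]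
    exact add_self _
  · exact fun hswap => (Finset.mem_offDiag.mp hp).2.2 (congrArg Prod.snd hswap)
  · obtain ⟨hfst, hsnd, hne⟩ := Finset.mem_offDiag.mp hp
    exact Finset.mem_offDiag.mpr ⟨hsnd, hfst, hne.symm⟩

theorem koszulBoundary_submatrix_mul_submatrix_eq_zero [Finite ι] {l m n : Type*} [Fintype m]
    (add_self : ∀ a : S, a + a = 0) {x : ι → S} (hx : Pairwise fun a b => Commute (x a) (x b))
    (rows : l → Finset ι) {mids : m → Finset ι} (cols : n → Finset ι)
    (mids_injective : Function.Injective mids)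
    (mids_exhaust : ∀ i t, t.card = (rows i).card + 1 → t ∈ Set.range mids) :
    (koszulBoundary x).submatrix rows mids * (koszulBoundary x).submatrix mids cols = 0 := by
  cases nonempty_fintype ι
  ext i k
  calc ∑ j, koszulBoundary x (rows i) (mids j) * koszulBoundary x (mids j) (cols k)
      = ∑ t, koszulBoundary x (rows i) t * koszulBoundary x t (cols k) := by
        refine Fintype.sum_of_injective mids mids_injective _ _ (fun t ht => ?_) fun _ => rfl
        rw [koszulBoundary_apply_eq_zero_of_card_ne x (mt (mids_exhaust i t) ht), zero_mul]
    _ = 0 := congrFun₂ (koszulBoundary_mul_self_eq_zero add_self hx) (rows i) (cols k)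

end Koszul

section FourElements

variable {S : Type*}

/-- The two-element subsets of `Fin 4` in lexicographic order, which is the order of the block
columns of `D₂` and of the block rows of `D₃`. -/
def tetrahedronEdges : Fin 6 → Finset (Fin 4) :=
  ![{0, 1}, {0, 2}, {0, 3}, {1, 2}, {1, 3}, {2, 3}]

/-- The three-element subsets of `Fin 4` in lexicographic order, which is the order of the block
columns of `D₃` and of the block rows of `D₄`. -/
def tetrahedronTriangles : Fin 4 → Finset (Fin 4) :=
  ![{0, 1, 2}, {0, 1, 3}, {0, 2, 3}, {1, 2, 3}]

theorem koszulBoundary_submatrix_empty_singleton [AddCommMonoid S] (f g h i : S) :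
    (koszulBoundary ![f, g, h, i]).submatrix (fun _ : Fin 1 => ∅) singleton =
      ![![f, g, h, i]] := by
  ext r c
  fin_cases r; fin_cases c <;> simp [koszulBoundary_apply]

theorem koszulBoundary_submatrix_singleton_edges [AddCommMonoid S] (f g h i : S) :
    (koszulBoundary ![f, g, h, i]).submatrix singleton tetrahedronEdges =
      ![![g, h, i, 0, 0, 0], ![f, 0, 0, h, i, 0], ![0, f, 0, g, 0, i], ![0, 0, f, 0, g, h]] := by
  ext r c
  fin_cases r <;> fin_cases c <;>
    simp +decide [koszulBoundary_apply, tetrahedronEdges, Finset.sum_insert]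

theorem koszulBoundary_submatrix_edges_triangles [AddCommMonoid S] (f g h i : S) :
    (koszulBoundary ![f, g, h, i]).submatrix tetrahedronEdges tetrahedronTriangles =
      ![![h, i, 0, 0], ![g, 0, i, 0], ![0, g, h, 0], ![f, 0, 0, i], ![0, f, 0, h],
        ![0, 0, f, g]] := by
  ext r c
  fin_cases r <;> fin_cases c <;>
    simp +decide [koszulBoundary_apply, tetrahedronEdges, tetrahedronTriangles, Finset.sum_insert]

theorem koszulBoundary_submatrix_triangles_univ [AddCommMonoid S] (f g h i : S) :
    (koszulBoundary ![f, g, h, i]).submatrix tetrahedronTriangles (fun _ : Fin 1 => .univ) =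
      ![![i], ![h], ![g], ![f]] := by
  ext r c
  fin_cases r <;> fin_cases c <;>
    simp +decide [koszulBoundary_apply, tetrahedronTriangles, Fin.sum_univ_four]

theorem pairwise_commute_vecCons_four [Mul S] {f g h i : S} (hfg : Commute f g)
    (hfh : Commute f h) (hfi : Commute f i) (hgh : Commute g h) (hgi : Commute g i)
    (hhi : Commute h i) :
    Pairwise fun a b => Commute (![f, g, h, i] a) (![f, g, h, i] b) := by
  intro a b _
  fin_cases a <;> fin_cases b <;> first | exact Commute.refl _ | assumption | (symm; assumption)

end FourElements

theorem blockOfBlocks_mul {R : Type*} [NonUnitalNonAssocSemiring R] {n r c d : ℕ}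
    (A : Matrix (Fin r) (Fin c) (Matrix (Fin n) (Fin n) R))
    (B : Matrix (Fin c) (Fin d) (Matrix (Fin n) (Fin n) R)) :
    blockOfBlocks r c A * blockOfBlocks c d B = blockOfBlocks r d (A * B) := by
  ext ⟨i, a⟩ ⟨k, b⟩
  simp only [blockOfBlocks, Matrix.mul_apply, Matrix.of_apply, Matrix.sum_apply,
    Fintype.sum_prod_type]

theorem blockOfBlocks_mul_eq_zero {R : Type*} [NonUnitalNonAssocSemiring R] {n r c d : ℕ}
    {A : Matrix (Fin r) (Fin c) (Matrix (Fin n) (Fin n) R)}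
    {B : Matrix (Fin c) (Fin d) (Matrix (Fin n) (Fin n) R)} (hAB : A * B = 0) :
    blockOfBlocks r c A * blockOfBlocks c d B = 0 := by
  rw [blockOfBlocks_mul, hAB]
  rfl

theorem multivariate_multicycle_t4_boundary_maps_square_zero_general
    {R : Type*} [Semiring R] [CharP R 2]
    {n : ℕ} {F G H I : Matrix (Fin n) (Fin n) R}
    (hFG : F * G = G * F) (hFH : F * H = H * F) (hFI : F * I = I * F)
    (hGH : G * H = H * G) (hGI : G * I = I * G) (hHI : H * I = I * H) :
    blockOfBlocks 1 4 ![![F, G, H, I]] *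
      blockOfBlocks 4 6 ![![G, H, I, 0, 0, 0], ![F, 0, 0, H, I, 0],
        ![0, F, 0, G, 0, I], ![0, 0, F, 0, G, H]] = 0 ∧
    blockOfBlocks 4 6 ![![G, H, I, 0, 0, 0], ![F, 0, 0, H, I, 0],
        ![0, F, 0, G, 0, I], ![0, 0, F, 0, G, H]] *
      blockOfBlocks 6 4 ![![H, I, 0, 0], ![G, 0, I, 0], ![0, G, H, 0],
        ![F, 0, 0, I], ![0, F, 0, H], ![0, 0, F, G]] = 0 ∧
    blockOfBlocks 6 4 ![![H, I, 0, 0], ![G, 0, I, 0], ![0, G, H, 0],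
        ![F, 0, 0, I], ![0, F, 0, H], ![0, 0, F, G]] *
      blockOfBlocks 4 1 ![![I], ![H], ![G], ![F]] = 0 := by
  have add_self (X : Matrix (Fin n) (Fin n) R) : X + X = 0 :=
    Matrix.ext fun a b => CharTwo.add_self_eq_zero (X a b)
  have hcomm := pairwise_commute_vecCons_four hFG hFH hFI hGH hGI hHI
  rw [← koszulBoundary_submatrix_empty_singleton, ← koszulBoundary_submatrix_singleton_edges,
    ← koszulBoundary_submatrix_edges_triangles, ← koszulBoundary_submatrix_triangles_univ]
  refine ⟨blockOfBlocks_mul_eq_zero ?_, blockOfBlocks_mul_eq_zero ?_, blockOfBlocks_mul_eq_zero ?_⟩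
  · exact koszulBoundary_submatrix_mul_submatrix_eq_zero add_self hcomm _ _
      Finset.singleton_injective (by decide)
  · exact koszulBoundary_submatrix_mul_submatrix_eq_zero add_self hcomm _ _ (by decide) (by decide)
  · exact koszulBoundary_submatrix_mul_submatrix_eq_zero add_self hcomm _ _ (by decide) (by decide)

/-- Let `F, G, H, I` be pairwise commuting `n × n` matrices over `𝔽₂ = ZMod 2`.
With the boundary maps `D₁ = [F G H I]`,
`D₂ = [[G,H,I,0,0,0],[F,0,0,H,I,0],[0,F,0,G,0,I],[0,0,F,0,G,H]]`,
`D₃ = [[H,I,0,0],[G,0,I,0],[0,G,H,0],[F,0,0,I],[0,F,0,H],[0,0,F,G]]`,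
`D₄ = [I; H; G; F]` of the Koszul complex on `(F,G,H,I)`, we have
`D₁ * D₂ = 0`, `D₂ * D₃ = 0`, and `D₃ * D₄ = 0`: the CSS orthogonality
condition and both metacheck conditions of the length-4 multivariate
multicycle code with `P_X = D₂`, `P_Z = D₃ᵀ`, `M_X = D₁`, `M_Z = D₄ᵀ`. -/
theorem multivariate_multicycle_t4_boundary_maps_square_zero
    (n : ℕ) (F G H I : Matrix (Fin n) (Fin n) (ZMod 2))
    (hFG : F * G = G * F) (hFH : F * H = H * F) (hFI : F * I = I * F)
    (hGH : G * H = H * G) (hGI : G * I = I * G) (hHI : H * I = I * H) :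
    blockOfBlocks 1 4 ![![F, G, H, I]] *
      blockOfBlocks 4 6 ![![G, H, I, 0, 0, 0], ![F, 0, 0, H, I, 0],
        ![0, F, 0, G, 0, I], ![0, 0, F, 0, G, H]] = 0 ∧
    blockOfBlocks 4 6 ![![G, H, I, 0, 0, 0], ![F, 0, 0, H, I, 0],
        ![0, F, 0, G, 0, I], ![0, 0, F, 0, G, H]] *
      blockOfBlocks 6 4 ![![H, I, 0, 0], ![G, 0, I, 0], ![0, G, H, 0],
        ![F, 0, 0, I], ![0, F, 0, H], ![0, 0, F, G]] = 0 ∧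
    blockOfBlocks 6 4 ![![H, I, 0, 0], ![G, 0, I, 0], ![0, G, H, 0],
        ![F, 0, 0, I], ![0, F, 0, H], ![0, 0, F, G]] *
      blockOfBlocks 4 1 ![![I], ![H], ![G], ![F]] = 0 :=
  multivariate_multicycle_t4_boundary_maps_square_zero_general hFG hFH hFI hGH hGI hHI
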